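/- Let n ≥ 3 and let x_1, …, x_n be distinct real numbers. If θ̂ ∈ ℍ maximizes the Cauchy likelihood L over ℍ, then ∑_{j=1}^n (x_j − θ̂)/(x_j − conj(θ̂)) = 0. -/

import Mathlib

open Complex Finset

/-- The Cauchy likelihood of the sample `x` at parameter `θ = μ + iσ`. -/
noncomputable def cauchyL {n : ℕ} (x : Fin n → ℝ) (θ : ℂ) : ℝ :=
  ∏ j, (θ.im / Real.pi) / ((x j - θ.re) ^ 2 + θ.im ^ 2)

lemma prod_crit {n : ℕ} (f : Fin n → ℝ → ℝ) (f' : Fin n → ℝ) (t : ℝ)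
    (hpos : ∀ j, 0 < f j t) (hd : ∀ j, HasDerivAt (f j) (f' j) t)
    (hm : IsLocalMax (fun s => ∏ j, f j s) t) : ∑ j, f' j / f j t = 0 := by
  have h1 : HasDerivAt (fun s => ∏ j, f j s)
      (∑ i, (∏ j ∈ univ.erase i, f j t) • f' i) t :=
    HasDerivAt.fun_finsetProd (fun j _ => hd j)
  have h2 := hm.hasDerivAt_eq_zero h1
  have hP : (∏ j, f j t) ≠ 0 := (Finset.prod_pos fun j _ => hpos j).ne'
  have h3 : (∏ j, f j t) * ∑ j, f' j / f j t = 0 := by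
    rw [← h2, Finset.mul_sum]
    refine Finset.sum_congr rfl fun i _ => ?_
    rw [← Finset.mul_prod_erase univ (fun j => f j t) (Finset.mem_univ i), smul_eq_mul]
    have := (hpos i).ne'
    field_simp
  exact (mul_eq_zero.mp h3).resolve_left hP

theorem stmt_3 (n : ℕ) (hn : 3 ≤ n) (x : Fin n → ℝ) (hx : Function.Injective x)
    (θhat : ℂ) (hθhat : 0 < θhat.im)
    (hmax : ∀ θ : ℂ, 0 < θ.im → cauchyL x θ ≤ cauchyL x θhat) :
    ∑ j, ((x j : ℂ) - θhat) / ((x j : ℂ) - (starRingEnd ℂ) θhat) = 0 := by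
  obtain ⟨m, s⟩ := θhat
  simp only at hθhat
  have hD : ∀ j, 0 < (x j - m) ^ 2 + s ^ 2 := fun j => by positivity
  have hpi := Real.pi_pos
  have hA := prod_crit (fun j t => (s / Real.pi) / ((x j - t) ^ 2 + s ^ 2))
    (fun j => (s / Real.pi) * (2 * (x j - m)) / ((x j - m) ^ 2 + s ^ 2) ^ 2) m
    (fun j => by have := hD j; positivity)
    (fun j => by
      have h1 : HasDerivAt (fun t : ℝ => (x j - t) ^ 2 + s ^ 2) (-(2 * (x j - m))) m := by
        exact ((((hasDerivAt_id m).const_sub (x j)).pow 2).add_const (s ^ 2)).congr_deriv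
          (by simp)
      exact ((hasDerivAt_const m (s / Real.pi)).div h1 (hD j).ne').congr_deriv (by ring))
    (Filter.Eventually.of_forall fun t => by
      simpa [cauchyL] using hmax ⟨t, s⟩ hθhat)
  have hB := prod_crit (fun j t => (t / Real.pi) / ((x j - m) ^ 2 + t ^ 2))
    (fun j => ((x j - m) ^ 2 - s ^ 2) / Real.pi / ((x j - m) ^ 2 + s ^ 2) ^ 2) s
    (fun j => by have := hD j; positivity)
    (fun j => by
      have h1 : HasDerivAt (fun t : ℝ => (x j - m) ^ 2 + t ^ 2) (2 * s) s := by
        exact (((hasDerivAt_id s).pow 2).const_add ((x j - m) ^ 2)).congr_deriv (by simp)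
      exact (((hasDerivAt_id s).div_const Real.pi).div h1 (hD j).ne').congr_deriv
        (by simp only [id]; ring))
    (by
      filter_upwards [lt_mem_nhds hθhat] with t ht
      simpa [cauchyL] using hmax ⟨m, t⟩ ht)
  have hA' : ∑ j, (-(2 * (x j - m) * s)) / ((x j - m) ^ 2 + s ^ 2) = 0 := by
    rw [← mul_zero (-s), ← hA, Finset.mul_sum]
    refine Finset.sum_congr rfl fun j _ => ?_
    have := (hD j).ne'
    field_simp
  have hB' : ∑ j, ((x j - m) ^ 2 - s ^ 2) / ((x j - m) ^ 2 + s ^ 2) = 0 := by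
    rw [← mul_zero s, ← hB, Finset.mul_sum]
    refine Finset.sum_congr rfl fun j _ => ?_
    have := (hD j).ne'
    field_simp
  apply Complex.ext
  · rw [Complex.re_sum, Complex.zero_re, ← hB']
    refine Finset.sum_congr rfl fun j _ => ?_
    simp [Complex.div_re, Complex.normSq_apply]
    have := (hD j).ne'
    rw [← sq, ← sq]
    field_simp
    ring
  · rw [Complex.im_sum, Complex.zero_im, ← hA']
    refine Finset.sum_congr rfl fun j _ => ?_
    simp [Complex.div_im, Complex.normSq_apply]
    have := (hD j).ne'
    rw [← sq, ← sq]
    field_simp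
    ring
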